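/- Let D be a *-SH domain and let x be a nonzero nonunit of D. Then xD is expressible, uniquely up to order, as a *-product of mutually *-comaximal *-homogeneous ideals, each of which is *-invertible. Moreover, if M is a maximal *-ideal of D containing x, then xD_M ∩ D (the contraction to D of the extension of xD to the localization D_M) is a *-invertible *-homogeneous ideal. -/

import Mathlib

open scoped nonZeroDivisors

/-- A star operation on the nonzero fractional ideals of an integral domain `D`
with quotient field `K`: it fixes nonzero principal fractional ideals, commutes with
multiplication by nonzero principal fractional ideals, is extensive, monotone and
idempotent (on nonzero fractional ideals). -/
structure StarOperation (D K : Type*) [CommRing D] [IsDomain D] [Field K]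
    [Algebra D K] [IsFractionRing D K] where
  star : FractionalIdeal D⁰ K → FractionalIdeal D⁰ K
  star_spanSingleton : ∀ x : K, x ≠ 0 →
    star (FractionalIdeal.spanSingleton D⁰ x) = FractionalIdeal.spanSingleton D⁰ x
  star_smul : ∀ (x : K) (I : FractionalIdeal D⁰ K), x ≠ 0 → I ≠ 0 →
    star (FractionalIdeal.spanSingleton D⁰ x * I) = FractionalIdeal.spanSingleton D⁰ x * star I
  le_star : ∀ I : FractionalIdeal D⁰ K, I ≠ 0 → I ≤ star I
  star_mono : ∀ I J : FractionalIdeal D⁰ K, I ≠ 0 → J ≠ 0 → I ≤ J → star I ≤ star J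
  star_idem : ∀ I : FractionalIdeal D⁰ K, I ≠ 0 → star (star I) = star I

namespace StarOperation

variable {D K : Type*} [CommRing D] [IsDomain D] [Field K] [Algebra D K] [IsFractionRing D K]
variable (s : StarOperation D K)

/-- `*` has finite character: for every nonzero fractional ideal `I`, `I^*` is the union
of `J^*` over the nonzero finitely generated fractional subideals `J` of `I`. -/
def FiniteCharacter : Prop :=
  ∀ I : FractionalIdeal D⁰ K, I ≠ 0 → ∀ x ∈ s.star I,
    ∃ J : FractionalIdeal D⁰ K, J ≠ 0 ∧ (J : Submodule D K).FG ∧ J ≤ I ∧ x ∈ s.star J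

/-- A (nonzero) integral ideal `I` of `D` is a `*`-ideal if `I^* = I`. -/
def IsStarIdeal (I : Ideal D) : Prop :=
  I ≠ ⊥ ∧ s.star (I : FractionalIdeal D⁰ K) = (I : FractionalIdeal D⁰ K)

/-- An integral ideal `I` of `D` is a `*`-ideal of finite type if `I = J^*` for some
nonzero finitely generated ideal `J`. -/
def IsFiniteTypeStarIdeal (I : Ideal D) : Prop :=
  ∃ J : Ideal D, J ≠ ⊥ ∧ J.FG ∧
    s.star (J : FractionalIdeal D⁰ K) = (I : FractionalIdeal D⁰ K)

/-- A maximal `*`-ideal: maximal among proper integral `*`-ideals. -/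
def IsMaxStarIdeal (M : Ideal D) : Prop :=
  M ≠ ⊤ ∧ s.IsStarIdeal M ∧ ∀ J : Ideal D, J ≠ ⊤ → s.IsStarIdeal J → M ≤ J → J = M

/-- `I` is `*`-homogeneous: a proper `*`-ideal of finite type such that `(J + J')^* ≠ D`
for every pair `J`, `J'` of proper `*`-ideals of finite type containing `I`. -/
def IsHomog (I : Ideal D) : Prop :=
  I ≠ ⊤ ∧ s.IsStarIdeal I ∧ s.IsFiniteTypeStarIdeal I ∧
    ∀ J J' : Ideal D, J ≠ ⊤ → J' ≠ ⊤ → s.IsStarIdeal J → s.IsStarIdeal J' →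
      s.IsFiniteTypeStarIdeal J → s.IsFiniteTypeStarIdeal J' → I ≤ J → I ≤ J' →
      s.star ((J + J' : Ideal D) : FractionalIdeal D⁰ K) ≠ 1

/-- The set `M(I) = {x ∈ D : (xD + I)^* ≠ D}` attached to an ideal `I`. -/
def MSet (I : Ideal D) : Set D :=
  {x : D | s.star ((Ideal.span {x} + I : Ideal D) : FractionalIdeal D⁰ K) ≠ 1}

/-- `A` and `B` are `*`-comaximal if `(A + B)^* = D`. -/
def StarComaximal (A B : Ideal D) : Prop :=
  s.star ((A + B : Ideal D) : FractionalIdeal D⁰ K) = 1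

/-- An integral ideal `I` is `*`-invertible if `(I · I⁻¹)^* = D`. -/
def StarInvertible (I : Ideal D) : Prop :=
  s.star ((I : FractionalIdeal D⁰ K) * (I : FractionalIdeal D⁰ K)⁻¹) = 1

/-- `D` is a `*`-SH domain: every principal ideal generated by a nonzero nonunit is a
`*`-product of finitely many `*`-homogeneous ideals. -/
def IsSHDomain : Prop :=
  ∀ x : D, x ≠ 0 → ¬IsUnit x →
    ∃ T : Multiset (Ideal D), (∀ J ∈ T, s.IsHomog J) ∧
      s.star ((T.prod : Ideal D) : FractionalIdeal D⁰ K) =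
        ((Ideal.span {x} : Ideal D) : FractionalIdeal D⁰ K)

/-- `D` has finite `*`-character: every nonzero nonunit lies in only finitely many
maximal `*`-ideals. -/
def FiniteStarCharacter : Prop :=
  ∀ x : D, x ≠ 0 → ¬IsUnit x → {P : Ideal D | s.IsMaxStarIdeal P ∧ x ∈ P}.Finite

end StarOperation

/-!
By finite character every proper `*`-ideal lies in a maximal `*`-ideal, maximal `*`-ideals are
prime, and a `*`-ideal of finite type is `*`-homogeneous exactly when it lies in only one of them.
Hence two `*`-homogeneous ideals `I`, `J` are either `*`-comaximal or lie in the same maximal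
`*`-ideal, and in the latter case `(I J)^*` is again `*`-homogeneous; merging such pairs turns any
`*`-product of `*`-homogeneous ideals into one with mutually `*`-comaximal factors.

Uniqueness comes from localization: if `L = (I R)^*` is such a product, with `I` the factor in the
maximal `*`-ideal `M`, then `R` is not contained in `M`, while elements outside `M` are
`*`-comaximal to `I` and can be cancelled modulo `I`. So `I = L D_M ∩ D` is determined by `L`. If
`L` is `*`-invertible, so is `I`, with `*`-inverse `R L⁻¹`.
-/

theorem multiset_pairwise_cons {α : Type*} {r : α → α → Prop} [Std.Symm r] {a : α}
    {m : Multiset α} : (a ::ₘ m).Pairwise r ↔ (∀ b ∈ m, r a b) ∧ m.Pairwise r := by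
  induction m using Quotient.inductionOn with
  | h l =>
    simp only [Multiset.quot_mk_to_coe, Multiset.cons_coe, Multiset.mem_coe,
      Multiset.pairwise_coe_iff_pairwise, List.pairwise_cons]

theorem exists_fg_le_sup_of_fg_le_sup {R M : Type*} [Semiring R] [AddCommMonoid M] [Module R M]
    {F P Q : Submodule R M} (hF : F.FG) (hle : F ≤ P ⊔ Q) :
    ∃ A ≤ P, ∃ B ≤ Q, A.FG ∧ B.FG ∧ F ≤ A ⊔ B := by
  induction F, hF using Submodule.fg_induction with
  | singleton x =>
    obtain ⟨a, ha, b, hb, rfl⟩ :=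
      Submodule.mem_sup.mp ((Submodule.span_singleton_le_iff_mem _ _).mp hle)
    refine ⟨R ∙ a, by simpa using ha, R ∙ b, by simpa using hb,
      Submodule.fg_span_singleton a, Submodule.fg_span_singleton b, ?_⟩
    rw [Submodule.span_singleton_le_iff_mem]
    exact Submodule.add_mem_sup (Submodule.mem_span_singleton_self a)
      (Submodule.mem_span_singleton_self b)
  | sup F G _ _ ihF ihG =>
    obtain ⟨A, hAP, B, hBQ, hA, hB, hFAB⟩ := ihF (le_sup_left.trans hle)
    obtain ⟨A', hAP', B', hBQ', hA', hB', hGAB⟩ := ihG (le_sup_right.trans hle)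
    exact ⟨A ⊔ A', sup_le hAP hAP', B ⊔ B', sup_le hBQ hBQ', hA.sup hA', hB.sup hB',
      sup_le (hFAB.trans (sup_le_sup le_sup_left le_sup_left))
        (hGAB.trans (sup_le_sup le_sup_right le_sup_right))⟩

theorem coeIdeal_comap_of_le_one {R P : Type*} [CommRing R] {S : Submonoid R} [CommRing P]
    [Algebra R P] {A : FractionalIdeal S P} (hA : A ≤ 1) :
    (((A : Submodule R P).comap (Algebra.linearMap R P) : Ideal R) : FractionalIdeal S P) = A := by
  have hrange : (A : Submodule R P) ≤ LinearMap.range (Algebra.linearMap R P) := by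
    rw [← Submodule.one_eq_range, ← FractionalIdeal.coe_one]
    exact hA
  exact FractionalIdeal.coeToSubmodule_injective (Submodule.map_comap_eq_self hrange)

instance {R P : Type*} [CommRing R] {S : Submonoid R} [CommRing P] [NoZeroDivisors P]
    [Algebra R P] : NoZeroDivisors (FractionalIdeal S P) :=
  FractionalIdeal.coeToSubmodule_injective.noZeroDivisors _ FractionalIdeal.coe_zero
    FractionalIdeal.coe_mul

/-- The contraction `L D_M ∩ D` to `D` of the extension of the ideal `L` to the localization
`D_M` at the prime `M`. -/
def localContraction {D : Type*} [CommRing D] (M : Ideal D) [M.IsPrime] (L : Ideal D) : Ideal D :=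
  Ideal.comap (algebraMap D (Localization.AtPrime M))
    (Ideal.map (algebraMap D (Localization.AtPrime M)) L)

theorem mem_localContraction {D : Type*} [CommRing D] {M L : Ideal D} [M.IsPrime] {y : D} :
    y ∈ localContraction M L ↔ ∃ t, t ∉ M ∧ t * y ∈ L :=
  IsLocalization.algebraMap_mem_map_algebraMap_iff M.primeCompl _ L y

namespace StarOperation

variable {D K : Type*} [CommRing D] [IsDomain D] [Field K] [Algebra D K] [IsFractionRing D K]

variable (s : StarOperation D K)

theorem star_one : s.star 1 = 1 := by
  simpa using s.star_spanSingleton 1 one_ne_zero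

variable {s}

theorem star_le_one {A : FractionalIdeal D⁰ K} (hA : A ≠ 0) (h : A ≤ 1) : s.star A ≤ 1 :=
  s.star_one ▸ s.star_mono A 1 hA one_ne_zero h

theorem star_ne_zero {A : FractionalIdeal D⁰ K} (hA : A ≠ 0) : s.star A ≠ 0 := fun h =>
  hA (FractionalIdeal.le_zero_iff.mp (h ▸ s.le_star A hA))

theorem star_mul_le {A B : FractionalIdeal D⁰ K} (hA : A ≠ 0) (hB : B ≠ 0) :
    s.star A * B ≤ s.star (A * B) := by
  refine FractionalIdeal.mul_le.mpr fun a ha b hb => ?_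
  obtain rfl | hb0 := eq_or_ne b 0
  · simpa using FractionalIdeal.zero_mem _
  have hb0' : FractionalIdeal.spanSingleton D⁰ b ≠ 0 :=
    FractionalIdeal.spanSingleton_ne_zero_iff.mpr hb0
  have hle : FractionalIdeal.spanSingleton D⁰ b * A ≤ A * B := by
    rw [mul_comm]
    gcongr
    simpa using hb
  refine s.star_mono _ _ (mul_ne_zero hb0' hA) (mul_ne_zero hA hB) hle ?_
  rw [s.star_smul b A hb0 hA, mul_comm a]
  exact FractionalIdeal.mul_mem_mul (FractionalIdeal.mem_spanSingleton_self _ _) ha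

theorem star_star_mul {A B : FractionalIdeal D⁰ K} (hA : A ≠ 0) (hB : B ≠ 0) :
    s.star (s.star A * B) = s.star (A * B) := by
  have hAB : A * B ≠ 0 := mul_ne_zero hA hB
  have hAB' : s.star A * B ≠ 0 := mul_ne_zero (star_ne_zero hA) hB
  apply le_antisymm
  · rw [← s.star_idem _ hAB]
    exact s.star_mono _ _ hAB' (star_ne_zero hAB) (star_mul_le hA hB)
  · refine s.star_mono _ _ hAB hAB' ?_
    gcongr
    exact s.le_star A hA

variable (s)

theorem coeIdeal_comap_star {I : Ideal D} (hI : I ≠ ⊥) :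
    (((s.star (I : FractionalIdeal D⁰ K) : Submodule D K).comap (Algebra.linearMap D K) :
      Ideal D) : FractionalIdeal D⁰ K) = s.star (I : FractionalIdeal D⁰ K) :=
  coeIdeal_comap_of_le_one <|
    star_le_one (FractionalIdeal.coeIdeal_ne_zero.mpr hI) FractionalIdeal.coeIdeal_le_one

open scoped Classical in
/-- The closure operator `I ↦ I^*` on integral ideals. The zero ideal, on which a star operation
is not specified, is declared closed. -/
noncomputable def idealClosure : ClosureOperator (Ideal D) :=
  .mk₂ (fun I => if I = ⊥ then ⊥ else
      (s.star (I : FractionalIdeal D⁰ K) : Submodule D K).comap (Algebra.linearMap D K))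
    (fun I => by
      split_ifs with hI
      · exact hI.le
      · rw [← FractionalIdeal.coeIdeal_le_coeIdeal K, s.coeIdeal_comap_star hI]
        exact s.le_star _ (FractionalIdeal.coeIdeal_ne_zero.mpr hI))
    (fun I J hIJ => by
      split_ifs at hIJ ⊢ with hI hJ hJ
      · exact bot_le
      · exact bot_le
      · exact absurd (le_bot_iff.mp hIJ) hI
      · rw [← FractionalIdeal.coeIdeal_le_coeIdeal K, s.coeIdeal_comap_star hJ] at hIJ ⊢
        have hI0 := FractionalIdeal.coeIdeal_ne_zero (K := K).mpr hI
        have hJ0 := FractionalIdeal.coeIdeal_ne_zero (K := K).mpr hJ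
        rw [s.coeIdeal_comap_star hI, ← s.star_idem _ hJ0]
        exact s.star_mono _ _ hI0 (star_ne_zero hJ0) hIJ)

theorem idealClosure_bot : s.idealClosure ⊥ = ⊥ := if_pos rfl

theorem coeIdeal_idealClosure {I : Ideal D} (hI : I ≠ ⊥) :
    (s.idealClosure I : FractionalIdeal D⁰ K) = s.star (I : FractionalIdeal D⁰ K) := by
  rw [← s.coeIdeal_comap_star hI]
  exact congrArg _ (if_neg hI)

theorem mem_idealClosure {I : Ideal D} (hI : I ≠ ⊥) {x : D} :
    x ∈ s.idealClosure I ↔ algebraMap D K x ∈ s.star (I : FractionalIdeal D⁰ K) := by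
  simp [← s.coeIdeal_idealClosure hI]

theorem star_coeIdeal_eq_coeIdeal {I J : Ideal D} (hI : I ≠ ⊥) :
    s.star (I : FractionalIdeal D⁰ K) = (J : FractionalIdeal D⁰ K) ↔ s.idealClosure I = J := by
  rw [← s.coeIdeal_idealClosure hI, FractionalIdeal.coeIdeal_inj]

theorem star_coeIdeal_eq_one {I : Ideal D} (hI : I ≠ ⊥) :
    s.star (I : FractionalIdeal D⁰ K) = 1 ↔ s.idealClosure I = ⊤ := by
  rw [← s.star_coeIdeal_eq_coeIdeal hI, FractionalIdeal.coeIdeal_top]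

theorem idealClosure_ne_bot {I : Ideal D} (hI : I ≠ ⊥) : s.idealClosure I ≠ ⊥ :=
  ne_bot_of_le_ne_bot hI (s.idealClosure.le_closure I)

theorem idealClosure_mul_left (I J : Ideal D) :
    s.idealClosure (s.idealClosure I * J) = s.idealClosure (I * J) := by
  obtain rfl | hI := eq_or_ne I ⊥
  · rw [idealClosure_bot]
  obtain rfl | hJ := eq_or_ne J ⊥
  · simp only [Ideal.mul_bot]
  have hI' := s.idealClosure_ne_bot hI
  have hIJ : I * J ≠ ⊥ := mul_ne_zero hI hJ
  have hIJ' : s.idealClosure I * J ≠ ⊥ := mul_ne_zero hI' hJ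
  rw [← s.star_coeIdeal_eq_coeIdeal hIJ', s.coeIdeal_idealClosure hIJ,
    FractionalIdeal.coeIdeal_mul, FractionalIdeal.coeIdeal_mul, s.coeIdeal_idealClosure hI,
    star_star_mul (FractionalIdeal.coeIdeal_ne_zero.mpr hI)
      (FractionalIdeal.coeIdeal_ne_zero.mpr hJ)]

theorem idealClosure_mul_right (I J : Ideal D) :
    s.idealClosure (I * s.idealClosure J) = s.idealClosure (I * J) := by
  rw [mul_comm, idealClosure_mul_left, mul_comm]

theorem le_idealClosure_of_mul_le {A B I : Ideal D} (hA : s.idealClosure (A ⊔ I) = ⊤)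
    (hAB : A * B ≤ I) : B ≤ s.idealClosure I := by
  calc B ≤ s.idealClosure B := s.idealClosure.le_closure B
    _ = s.idealClosure ((A ⊔ I) * B) := by rw [← idealClosure_mul_left, hA, Ideal.top_mul]
    _ ≤ s.idealClosure I := s.idealClosure.monotone <| by
      rw [Ideal.sup_mul]
      exact sup_le hAB Ideal.mul_le_left

theorem isStarIdeal_iff {I : Ideal D} :
    s.IsStarIdeal I ↔ I ≠ ⊥ ∧ s.idealClosure.IsClosed I := by
  rw [s.idealClosure.isClosed_iff]
  exact and_congr_right s.star_coeIdeal_eq_coeIdeal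

theorem isStarIdeal_idealClosure {I : Ideal D} (hI : I ≠ ⊥) :
    s.IsStarIdeal (s.idealClosure I) :=
  s.isStarIdeal_iff.mpr ⟨s.idealClosure_ne_bot hI, s.idealClosure.isClosed_closure I⟩

theorem isFiniteTypeStarIdeal_iff {I : Ideal D} :
    s.IsFiniteTypeStarIdeal I ↔ ∃ J : Ideal D, J ≠ ⊥ ∧ J.FG ∧ s.idealClosure J = I :=
  exists_congr fun _ => and_congr_right fun hJ =>
    and_congr_right fun _ => s.star_coeIdeal_eq_coeIdeal hJ

theorem isFiniteTypeStarIdeal_idealClosure {I : Ideal D} (hI : I ≠ ⊥) (hfg : I.FG) :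
    s.IsFiniteTypeStarIdeal (s.idealClosure I) :=
  s.isFiniteTypeStarIdeal_iff.mpr ⟨I, hI, hfg, rfl⟩

theorem starComaximal_iff_idealClosure_sup {I J : Ideal D} (hI : I ≠ ⊥) :
    s.StarComaximal I J ↔ s.idealClosure (I ⊔ J) = ⊤ :=
  s.star_coeIdeal_eq_one (ne_bot_of_le_ne_bot hI le_sup_left)

instance : Std.Symm s.StarComaximal where
  symm A B h := by rwa [StarComaximal, add_comm] at h

variable {s}

theorem StarComaximal.idealClosure_mul {I J B : Ideal D} (hI : I ≠ ⊥) (hJ : J ≠ ⊥)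
    (hIB : s.StarComaximal I B) (hJB : s.StarComaximal J B) :
    s.StarComaximal (s.idealClosure (I * J)) B := by
  rw [starComaximal_iff_idealClosure_sup _ hI] at hIB
  rw [starComaximal_iff_idealClosure_sup _ hJ] at hJB
  rw [starComaximal_iff_idealClosure_sup _ (s.idealClosure_ne_bot (mul_ne_zero hI hJ)),
    s.idealClosure.closure_sup_closure_left]
  have hle : (I ⊔ B) * (J ⊔ B) ≤ I * J ⊔ B := by
    rw [Ideal.sup_mul, Ideal.mul_sup]
    exact sup_le (sup_le_sup_left Ideal.mul_le_right _) (Ideal.mul_le_left.trans le_sup_right)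
  refine top_unique ?_
  calc ⊤ = s.idealClosure (s.idealClosure (I ⊔ B) * s.idealClosure (J ⊔ B)) := by
        rw [hIB, hJB, Ideal.top_mul, s.idealClosure.closure_top]
    _ = s.idealClosure ((I ⊔ B) * (J ⊔ B)) := by
        rw [idealClosure_mul_left, idealClosure_mul_right]
    _ ≤ s.idealClosure (I * J ⊔ B) := s.idealClosure.monotone hle

theorem IsFiniteTypeStarIdeal.isStarIdeal {I : Ideal D} (hI : s.IsFiniteTypeStarIdeal I) :
    s.IsStarIdeal I := by
  obtain ⟨J, hJ, -, rfl⟩ := s.isFiniteTypeStarIdeal_iff.mp hI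
  exact s.isStarIdeal_idealClosure hJ

theorem IsFiniteTypeStarIdeal.idealClosure_mul {I J : Ideal D} (hI : s.IsFiniteTypeStarIdeal I)
    (hJ : s.IsFiniteTypeStarIdeal J) : s.IsFiniteTypeStarIdeal (s.idealClosure (I * J)) := by
  obtain ⟨A, hA, hAfg, rfl⟩ := s.isFiniteTypeStarIdeal_iff.mp hI
  obtain ⟨B, hB, hBfg, rfl⟩ := s.isFiniteTypeStarIdeal_iff.mp hJ
  rw [idealClosure_mul_left, idealClosure_mul_right]
  exact s.isFiniteTypeStarIdeal_idealClosure (mul_ne_zero hA hB) (hAfg.mul hBfg)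

theorem FiniteCharacter.exists_fg_le_mem_idealClosure (hs : s.FiniteCharacter) {I : Ideal D}
    {x : D} (hx : x ∈ s.idealClosure I) : ∃ J ≤ I, J.FG ∧ x ∈ s.idealClosure J := by
  obtain rfl | hI := eq_or_ne I ⊥
  · exact ⟨⊥, le_rfl, Submodule.fg_bot, hx⟩
  obtain ⟨A, hA0, hAfg, hAI, hxA⟩ :=
    hs _ (FractionalIdeal.coeIdeal_ne_zero.mpr hI) _ ((s.mem_idealClosure hI).mp hx)
  obtain ⟨J, rfl⟩ := FractionalIdeal.le_one_iff_exists_coeIdeal.mp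
    (hAI.trans FractionalIdeal.coeIdeal_le_one)
  have hJ : J ≠ ⊥ := FractionalIdeal.coeIdeal_ne_zero.mp hA0
  exact ⟨J, (FractionalIdeal.coeIdeal_le_coeIdeal K).mp hAI,
    (FractionalIdeal.coeIdeal_fg D⁰ (IsFractionRing.injective D K) J).mp hAfg,
    (s.mem_idealClosure hJ).mpr hxA⟩

theorem FiniteCharacter.isClosed_sSup (hs : s.FiniteCharacter) {S : Set (Ideal D)}
    (hne : S.Nonempty) (hdir : DirectedOn (· ≤ ·) S)
    (hS : ∀ I ∈ S, s.idealClosure.IsClosed I) : s.idealClosure.IsClosed (sSup S) := by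
  refine s.idealClosure.isClosed_iff_closure_le.mpr fun x hx => ?_
  obtain ⟨F, hF, hFfg, hxF⟩ := hs.exists_fg_le_mem_idealClosure hx
  obtain ⟨I, hI, hFI⟩ := (CompleteLattice.isCompactElement_iff_le_of_directed_sSup_le _ _).mp
    ((Submodule.fg_iff_compact F).mp hFfg) S hne hdir hF
  exact le_sSup hI (s.idealClosure.closure_min hFI (hS I hI) hxF)

theorem FiniteCharacter.exists_le_isMaxStarIdeal (hs : s.FiniteCharacter) {I : Ideal D}
    (hI : I ≠ ⊥) (htop : s.idealClosure I ≠ ⊤) : ∃ M, s.IsMaxStarIdeal M ∧ I ≤ M := by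
  obtain ⟨M, hIM, hM⟩ := zorn_le_nonempty₀ {J | s.idealClosure.IsClosed J ∧ J ≠ ⊤}
    (fun C hC hchain J hJ => by
      have hne : sSup C ≠ ⊤ := fun hsup => by
        obtain ⟨L, hL, h1⟩ := (Submodule.mem_sSup_of_directed ⟨J, hJ⟩ hchain.directedOn).mp
          ((Ideal.eq_top_iff_one _).mp hsup)
        exact (hC hL).2 ((Ideal.eq_top_iff_one _).mpr h1)
      exact ⟨sSup C, ⟨hs.isClosed_sSup ⟨J, hJ⟩ hchain.directedOn fun I hI => (hC hI).1, hne⟩,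
        fun I hI => le_sSup hI⟩)
    (s.idealClosure I) ⟨s.idealClosure.isClosed_closure I, htop⟩
  have hM0 : M ≠ ⊥ := ne_bot_of_le_ne_bot (s.idealClosure_ne_bot hI) hIM
  exact ⟨M, ⟨hM.prop.2, s.isStarIdeal_iff.mpr ⟨hM0, hM.prop.1⟩, fun J hJ hJs hMJ =>
    (hM.eq_of_le ⟨(s.isStarIdeal_iff.mp hJs).2, hJ⟩ hMJ).symm⟩,
    (s.idealClosure.le_closure I).trans hIM⟩

namespace IsMaxStarIdeal

variable {M : Ideal D}

theorem ne_bot (hM : s.IsMaxStarIdeal M) : M ≠ ⊥ := hM.2.1.1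

theorem idealClosure_le_iff (hM : s.IsMaxStarIdeal M) {I : Ideal D} :
    s.idealClosure I ≤ M ↔ I ≤ M :=
  (s.isStarIdeal_iff.mp hM.2.1).2.closure_le_iff

theorem idealClosure_ne_top (hM : s.IsMaxStarIdeal M) {I : Ideal D} (hIM : I ≤ M) :
    s.idealClosure I ≠ ⊤ :=
  ne_top_of_le_ne_top hM.1 (hM.idealClosure_le_iff.mpr hIM)

theorem idealClosure_eq_top (hM : s.IsMaxStarIdeal M) {I : Ideal D} (hMI : M < I) :
    s.idealClosure I = ⊤ := by
  by_contra hne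
  have hI0 : I ≠ ⊥ := ne_bot_of_le_ne_bot hM.ne_bot hMI.le
  have hle := s.idealClosure.le_closure I
  exact (hMI.trans_le hle).ne'
    (hM.2.2 _ hne (s.isStarIdeal_idealClosure hI0) (hMI.le.trans hle))

theorem isPrime (hM : s.IsMaxStarIdeal M) : M.IsPrime := by
  refine ⟨hM.1, fun {a b} hab => or_iff_not_imp_left.mpr fun ha => ?_⟩
  have htop : s.idealClosure (Ideal.span {a} ⊔ M) = ⊤ := hM.idealClosure_eq_top <|
    right_lt_sup.mpr fun h => ha ((Ideal.span_singleton_le_iff_mem _).mp h)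
  have hle : Ideal.span {b} ≤ s.idealClosure M := s.le_idealClosure_of_mul_le htop <| by
    rwa [Ideal.span_singleton_mul_span_singleton, Ideal.span_singleton_le_iff_mem]
  exact (Ideal.span_singleton_le_iff_mem _).mp (hle.trans (hM.idealClosure_le_iff.mpr le_rfl))

theorem eq_of_le (hM : s.IsMaxStarIdeal M) {N : Ideal D} (hN : s.IsMaxStarIdeal N)
    (hMN : M ≤ N) : N = M :=
  hM.2.2 N hN.1 hN.2.1 hMN

end IsMaxStarIdeal

theorem FiniteCharacter.idealClosure_eq_top_iff (hs : s.FiniteCharacter) {I : Ideal D}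
    (hI : I ≠ ⊥) : s.idealClosure I = ⊤ ↔ ∀ M, s.IsMaxStarIdeal M → ¬ I ≤ M := by
  refine ⟨fun htop M hM hIM => hM.idealClosure_ne_top hIM htop, fun h => ?_⟩
  by_contra htop
  obtain ⟨M, hM, hIM⟩ := hs.exists_le_isMaxStarIdeal hI htop
  exact h M hM hIM

theorem FiniteCharacter.starComaximal_iff (hs : s.FiniteCharacter) {I J : Ideal D} (hI : I ≠ ⊥) :
    s.StarComaximal I J ↔ ∀ M, s.IsMaxStarIdeal M → I ≤ M → ¬ J ≤ M := by
  simp only [s.starComaximal_iff_idealClosure_sup hI,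
    hs.idealClosure_eq_top_iff (ne_bot_of_le_ne_bot hI le_sup_left), sup_le_iff, not_and]

namespace IsHomog

variable {I J : Ideal D}

theorem ne_bot (hI : s.IsHomog I) : I ≠ ⊥ := hI.2.1.1

theorem isClosed (hI : s.IsHomog I) : s.idealClosure.IsClosed I := (s.isStarIdeal_iff.mp hI.2.1).2

theorem isFiniteTypeStarIdeal (hI : s.IsHomog I) : s.IsFiniteTypeStarIdeal I := hI.2.2.1

theorem exists_isMaxStarIdeal (hI : s.IsHomog I) (hs : s.FiniteCharacter) :
    ∃ M, s.IsMaxStarIdeal M ∧ I ≤ M :=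
  hs.exists_le_isMaxStarIdeal hI.ne_bot (hI.isClosed.closure_eq.trans_ne hI.1)

/-- Homogeneity only speaks of finite type `*`-ideals, so a `*`-comaximal pair `M`, `N` above `I`
is first cut down to `(F + A)^*` and `(F + B)^*`, with `I = F^*` and `A ≤ M`, `B ≤ N` finitely
generated. -/
theorem eq_of_isMaxStarIdeal (hI : s.IsHomog I) (hs : s.FiniteCharacter) {M N : Ideal D}
    (hM : s.IsMaxStarIdeal M) (hN : s.IsMaxStarIdeal N) (hIM : I ≤ M) (hIN : I ≤ N) :
    M = N := by
  by_contra hne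
  have htop : s.idealClosure (M ⊔ N) = ⊤ := hM.idealClosure_eq_top <|
    left_lt_sup.mpr fun hNM => hne (hN.eq_of_le hM hNM)
  obtain ⟨G, hGle, hG, h1G⟩ :=
    hs.exists_fg_le_mem_idealClosure ((Ideal.eq_top_iff_one _).mp htop)
  obtain ⟨A, hAM, B, hBN, hA, hB, hGAB⟩ := exists_fg_le_sup_of_fg_le_sup hG hGle
  obtain ⟨F, hF0, hF, rfl⟩ := s.isFiniteTypeStarIdeal_iff.mp hI.isFiniteTypeStarIdeal
  have hsup0 (C : Ideal D) : F ⊔ C ≠ ⊥ := ne_bot_of_le_ne_bot hF0 le_sup_left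
  have hproper {C P : Ideal D} (hP : s.IsMaxStarIdeal P) (hFP : s.idealClosure F ≤ P)
      (hCP : C ≤ P) : s.idealClosure (F ⊔ C) ≠ ⊤ :=
    hP.idealClosure_ne_top (sup_le (hP.idealClosure_le_iff.mp hFP) hCP)
  refine hI.2.2.2 (s.idealClosure (F ⊔ A)) (s.idealClosure (F ⊔ B))
    (hproper hM hIM hAM) (hproper hN hIN hBN)
    (s.isStarIdeal_idealClosure (hsup0 A)) (s.isStarIdeal_idealClosure (hsup0 B))
    (s.isFiniteTypeStarIdeal_idealClosure (hsup0 A) (Submodule.FG.sup hF hA))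
    (s.isFiniteTypeStarIdeal_idealClosure (hsup0 B) (Submodule.FG.sup hF hB))
    (s.idealClosure.monotone le_sup_left) (s.idealClosure.monotone le_sup_left)
    ((s.starComaximal_iff_idealClosure_sup (s.idealClosure_ne_bot (hsup0 A))).mpr ?_)
  rw [s.idealClosure.closure_sup_closure, Ideal.eq_top_iff_one]
  exact s.idealClosure.monotone (hGAB.trans (sup_le_sup le_sup_right le_sup_right)) h1G

end IsHomog

theorem isHomog_iff_existsUnique_isMaxStarIdeal (hs : s.FiniteCharacter) {I : Ideal D} :
    s.IsHomog I ↔ s.IsFiniteTypeStarIdeal I ∧ ∃! M, s.IsMaxStarIdeal M ∧ I ≤ M := by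
  constructor
  · intro hI
    obtain ⟨M, hM, hIM⟩ := hI.exists_isMaxStarIdeal hs
    exact ⟨hI.isFiniteTypeStarIdeal, M, ⟨hM, hIM⟩, fun N hN =>
      hI.eq_of_isMaxStarIdeal hs hN.1 hM hN.2 hIM⟩
  · rintro ⟨hft, M, ⟨hM, hIM⟩, huniq⟩
    refine ⟨ne_top_of_le_ne_top hM.1 hIM, hft.isStarIdeal, hft, ?_⟩
    intro J J' hJ hJ' hJs hJs' _ _ hIJ hIJ'
    have le_of_isStarIdeal {A : Ideal D} (hA : A ≠ ⊤) (hAs : s.IsStarIdeal A) (hIA : I ≤ A) :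
        A ≤ M := by
      obtain ⟨hA0, hAc⟩ := s.isStarIdeal_iff.mp hAs
      obtain ⟨N, hN, hAN⟩ := hs.exists_le_isMaxStarIdeal hA0 (hAc.closure_eq.trans_ne hA)
      exact huniq N ⟨hN, hIA.trans hAN⟩ ▸ hAN
    exact fun hcomax => (hs.starComaximal_iff hJs.1).mp hcomax M hM
      (le_of_isStarIdeal hJ hJs hIJ) (le_of_isStarIdeal hJ' hJs' hIJ')

namespace IsHomog

variable {I J : Ideal D}

theorem exists_isMaxStarIdeal_of_not_starComaximal (hI : s.IsHomog I) (hs : s.FiniteCharacter)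
    (hIJ : ¬ s.StarComaximal I J) : ∃ M, s.IsMaxStarIdeal M ∧ I ≤ M ∧ J ≤ M := by
  simpa only [hs.starComaximal_iff hI.ne_bot, not_forall, not_not, exists_prop] using hIJ

theorem idealClosure_mul (hI : s.IsHomog I) (hJ : s.IsHomog J) (hs : s.FiniteCharacter)
    (hIJ : ¬ s.StarComaximal I J) : s.IsHomog (s.idealClosure (I * J)) := by
  obtain ⟨M, hM, hIM, hJM⟩ := hI.exists_isMaxStarIdeal_of_not_starComaximal hs hIJ
  refine (isHomog_iff_existsUnique_isMaxStarIdeal hs).mpr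
    ⟨hI.isFiniteTypeStarIdeal.idealClosure_mul hJ.isFiniteTypeStarIdeal, M,
      ⟨hM, hM.idealClosure_le_iff.mpr (Ideal.mul_le_left.trans hIM)⟩, ?_⟩
  rintro N ⟨hN, hle⟩
  rcases hN.isPrime.mul_le.mp (hN.idealClosure_le_iff.mp hle) with hIN | hJN
  · exact hI.eq_of_isMaxStarIdeal hs hN hM hIN hIM
  · exact hJ.eq_of_isMaxStarIdeal hs hN hM hJN hJM

theorem starComaximal_of_not_starComaximal (hI : s.IsHomog I) (hJ : s.IsHomog J)
    (hs : s.FiniteCharacter) (hIJ : ¬ s.StarComaximal I J) {B : Ideal D}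
    (hJB : s.StarComaximal J B) : s.StarComaximal I B := by
  obtain ⟨M, hM, hIM, hJM⟩ := hI.exists_isMaxStarIdeal_of_not_starComaximal hs hIJ
  refine (hs.starComaximal_iff hI.ne_bot).mpr fun N hN hIN => ?_
  rw [hI.eq_of_isMaxStarIdeal hs hN hM hIN hIM]
  exact (hs.starComaximal_iff hJ.ne_bot).mp hJB M hM hJM

theorem not_starComaximal_self (hI : s.IsHomog I) : ¬ s.StarComaximal I I := by
  rw [s.starComaximal_iff_idealClosure_sup hI.ne_bot, sup_idem, hI.isClosed.closure_eq]
  exact hI.1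

theorem mem_of_mul_mem (hI : s.IsHomog I) (hs : s.FiniteCharacter) {M : Ideal D}
    (hM : s.IsMaxStarIdeal M) (hIM : I ≤ M) {t y : D} (ht : t ∉ M) (hty : t * y ∈ I) :
    y ∈ I := by
  have htop : s.idealClosure (Ideal.span {t} ⊔ I) = ⊤ := by
    refine (hs.idealClosure_eq_top_iff (ne_bot_of_le_ne_bot hI.ne_bot le_sup_right)).mpr
      fun N hN hle => ht ?_
    rw [← hI.eq_of_isMaxStarIdeal hs hN hM (le_sup_right.trans hle) hIM]
    exact (Ideal.span_singleton_le_iff_mem _).mp (le_sup_left.trans hle)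
  have hle : Ideal.span {y} ≤ s.idealClosure I := s.le_idealClosure_of_mul_le htop <| by
    rwa [Ideal.span_singleton_mul_span_singleton, Ideal.span_singleton_le_iff_mem]
  rwa [hI.isClosed.closure_eq, Ideal.span_singleton_le_iff_mem] at hle

theorem localContraction_idealClosure_mul (hI : s.IsHomog I) (hs : s.FiniteCharacter)
    {M R : Ideal D} [M.IsPrime] (hM : s.IsMaxStarIdeal M) (hIM : I ≤ M) (hRM : ¬ R ≤ M) :
    localContraction M (s.idealClosure (I * R)) = I := by
  ext y
  rw [mem_localContraction]
  constructor
  · rintro ⟨t, ht, hty⟩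
    exact hI.mem_of_mul_mem hs hM hIM ht
      (s.idealClosure.closure_min Ideal.mul_le_left hI.isClosed hty)
  · intro hy
    obtain ⟨t, htR, htM⟩ := SetLike.not_le_iff_exists.mp hRM
    exact ⟨t, htM, s.idealClosure.le_closure _ (mul_comm t y ▸ Ideal.mul_mem_mul hy htR)⟩

end IsHomog

theorem starInvertible_of_star_mul_eq_one {I : Ideal D} {B : FractionalIdeal D⁰ K} (hI : I ≠ ⊥)
    (hB : B ≠ 0) (h : s.star (I * B) = 1) : s.StarInvertible I := by
  have hI' : (I : FractionalIdeal D⁰ K) ≠ 0 := FractionalIdeal.coeIdeal_ne_zero.mpr hI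
  have hIB : (I : FractionalIdeal D⁰ K) * B ≠ 0 := mul_ne_zero hI' hB
  have hinv : B ≤ (I : FractionalIdeal D⁰ K)⁻¹ := by
    rw [FractionalIdeal.inv_eq, FractionalIdeal.le_div_iff_mul_le hI', mul_comm, ← h]
    exact s.le_star _ hIB
  have hle : (I : FractionalIdeal D⁰ K) * B ≤ I * (I : FractionalIdeal D⁰ K)⁻¹ := by gcongr
  have hne : (I : FractionalIdeal D⁰ K) * (I : FractionalIdeal D⁰ K)⁻¹ ≠ 0 :=
    ne_bot_of_le_ne_bot hIB hle
  refine le_antisymm (star_le_one hne ?_) (h ▸ s.star_mono _ _ hIB hne hle)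
  rw [FractionalIdeal.inv_eq]
  exact FractionalIdeal.mul_one_div_le_one

variable (s) in
theorem starInvertible_span_singleton {x : D} (hx : x ≠ 0) :
    s.StarInvertible (Ideal.span {x}) := by
  have hxK : algebraMap D K x ≠ 0 := by simpa using hx
  rw [StarInvertible, FractionalIdeal.coeIdeal_span_singleton,
    FractionalIdeal.spanSingleton_mul_inv K hxK, star_one]

theorem StarInvertible.of_idealClosure_mul {I R : Ideal D} (hI : I ≠ ⊥) (hR : R ≠ ⊥)
    (h : s.StarInvertible (s.idealClosure (I * R))) : s.StarInvertible I := by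
  have hIR : I * R ≠ ⊥ := mul_ne_zero hI hR
  have hL : (s.idealClosure (I * R) : FractionalIdeal D⁰ K) ≠ 0 :=
    FractionalIdeal.coeIdeal_ne_zero.mpr (s.idealClosure_ne_bot hIR)
  have hinv : (s.idealClosure (I * R) : FractionalIdeal D⁰ K)⁻¹ ≠ 0 :=
    right_ne_zero_of_mul (FractionalIdeal.bot_lt_mul_inv hL).ne'
  refine starInvertible_of_star_mul_eq_one hI
    (mul_ne_zero (FractionalIdeal.coeIdeal_ne_zero.mpr hR) hinv) ?_
  rwa [← mul_assoc, ← FractionalIdeal.coeIdeal_mul,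
    ← star_star_mul (FractionalIdeal.coeIdeal_ne_zero.mpr hIR) hinv,
    ← s.coeIdeal_idealClosure hIR]

variable (s) in
/-- `T` is a factorization of `L` as a `*`-product of mutually `*`-comaximal `*`-homogeneous
ideals. The `*`-product is encoded by `idealClosure`, which agrees with `*` on `T.prod` since the
factors are nonzero. -/
structure IsComaximalFactorization (T : Multiset (Ideal D)) (L : Ideal D) : Prop where
  isHomog : ∀ J ∈ T, s.IsHomog J
  pairwise : T.Pairwise s.StarComaximal
  idealClosure_prod : s.idealClosure T.prod = L

theorem prod_ne_bot_of_isHomog {T : Multiset (Ideal D)} (hT : ∀ J ∈ T, s.IsHomog J) :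
    T.prod ≠ ⊥ :=
  Multiset.prod_ne_zero fun h => (hT _ h).ne_bot rfl

theorem isComaximalFactorization_iff {T : Multiset (Ideal D)} {L : Ideal D} :
    s.IsComaximalFactorization T L ↔ (∀ J ∈ T, s.IsHomog J) ∧ T.Pairwise s.StarComaximal ∧
      s.star (T.prod : FractionalIdeal D⁰ K) = (L : FractionalIdeal D⁰ K) := by
  constructor
  · rintro ⟨hT, hpair, hprod⟩
    exact ⟨hT, hpair, (s.star_coeIdeal_eq_coeIdeal (prod_ne_bot_of_isHomog hT)).mpr hprod⟩
  · rintro ⟨hT, hpair, hprod⟩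
    exact ⟨hT, hpair, (s.star_coeIdeal_eq_coeIdeal (prod_ne_bot_of_isHomog hT)).mp hprod⟩

namespace IsComaximalFactorization

variable {T U : Multiset (Ideal D)} {I J L M : Ideal D}

theorem cons_iff : s.IsComaximalFactorization (J ::ₘ T) L ↔ s.IsHomog J ∧
    (∀ I ∈ T, s.StarComaximal J I) ∧ s.IsComaximalFactorization T (s.idealClosure T.prod) ∧
      s.idealClosure (J * T.prod) = L := by
  constructor
  · rintro ⟨hT, hpair, hprod⟩
    rw [Multiset.forall_mem_cons] at hT
    rw [multiset_pairwise_cons] at hpair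
    rw [Multiset.prod_cons] at hprod
    exact ⟨hT.1, hpair.1, ⟨hT.2, hpair.2, rfl⟩, hprod⟩
  · rintro ⟨hJ, hJT, hT, hprod⟩
    exact ⟨Multiset.forall_mem_cons.mpr ⟨hJ, hT.isHomog⟩,
      multiset_pairwise_cons.mpr ⟨hJT, hT.pairwise⟩, by rwa [Multiset.prod_cons]⟩

/-- A new factor `I` is either `*`-comaximal to all factors, and then it is adjoined, or it lies
in the same maximal `*`-ideal as some factor `J`, and then `(I J)^*` replaces `J`. -/
theorem exists_idealClosure_mul (hs : s.FiniteCharacter) (hU : s.IsComaximalFactorization U L)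
    (hI : s.IsHomog I) : ∃ T, s.IsComaximalFactorization T (s.idealClosure (I * L)) := by
  by_cases hcomax : ∀ J ∈ U, s.StarComaximal I J
  · obtain rfl := hU.idealClosure_prod
    exact ⟨I ::ₘ U, cons_iff.mpr ⟨hI, hcomax, hU, (s.idealClosure_mul_right I U.prod).symm⟩⟩
  · push Not at hcomax
    obtain ⟨J, hJU, hIJ⟩ := hcomax
    obtain ⟨V, rfl⟩ := Multiset.exists_cons_of_mem hJU
    obtain ⟨hJ, hJV, hV, rfl⟩ := cons_iff.mp hU
    refine ⟨s.idealClosure (I * J) ::ₘ V, cons_iff.mpr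
      ⟨hI.idealClosure_mul hJ hs hIJ, fun B hB => ?_, hV, ?_⟩⟩
    · have hIB := hI.starComaximal_of_not_starComaximal hJ hs hIJ (hJV B hB)
      exact hIB.idealClosure_mul hI.ne_bot hJ.ne_bot (hJV B hB)
    · rw [idealClosure_mul_left, idealClosure_mul_right, mul_assoc]

theorem exists_of_isHomog (hs : s.FiniteCharacter) (hT : ∀ J ∈ T, s.IsHomog J) :
    ∃ U, s.IsComaximalFactorization U (s.idealClosure T.prod) := by
  induction T using Multiset.induction_on with
  | empty => exact ⟨0, hT, Multiset.pairwise_zero _, rfl⟩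
  | cons J T ih =>
    rw [Multiset.forall_mem_cons] at hT
    obtain ⟨U, hU⟩ := ih hT.2
    simpa only [Multiset.prod_cons, idealClosure_mul_right] using
      hU.exists_idealClosure_mul hs hT.1

theorem localContraction_eq (hs : s.FiniteCharacter) (hT : s.IsComaximalFactorization T L)
    (hJ : J ∈ T) [M.IsPrime] (hM : s.IsMaxStarIdeal M) (hJM : J ≤ M) :
    localContraction M L = J := by
  obtain ⟨U, rfl⟩ := Multiset.exists_cons_of_mem hJ
  obtain ⟨hJh, hJU, -, rfl⟩ := cons_iff.mp hT
  refine hJh.localContraction_idealClosure_mul hs hM hJM fun hle => ?_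
  obtain ⟨I, hI, hIM⟩ := hM.isPrime.multiset_prod_le.mp hle
  exact (hs.starComaximal_iff hJh.ne_bot).mp (hJU I hI) M hM hJM hIM

theorem localContraction_mem (hs : s.FiniteCharacter) (hT : s.IsComaximalFactorization T L)
    [M.IsPrime] (hM : s.IsMaxStarIdeal M) (hLM : L ≤ M) : localContraction M L ∈ T := by
  rw [← hT.idealClosure_prod, hM.idealClosure_le_iff, hM.isPrime.multiset_prod_le] at hLM
  obtain ⟨J, hJ, hJM⟩ := hLM
  rwa [hT.localContraction_eq hs hJ hM hJM]

theorem le_of_mem (hT : s.IsComaximalFactorization T L) (hJ : J ∈ T) : L ≤ J := by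
  rw [← hT.idealClosure_prod]
  exact s.idealClosure.closure_min
    (Ideal.multiset_prod_le_inf.trans (Multiset.inf_le hJ)) (hT.isHomog J hJ).isClosed

theorem subset (hs : s.FiniteCharacter) (hT : s.IsComaximalFactorization T L)
    (hU : s.IsComaximalFactorization U L) : T ⊆ U := by
  intro J hJ
  obtain ⟨M, hM, hJM⟩ := (hT.isHomog J hJ).exists_isMaxStarIdeal hs
  have := hM.isPrime
  rw [← hT.localContraction_eq hs hJ hM hJM]
  exact hU.localContraction_mem hs hM ((hT.le_of_mem hJ).trans hJM)

theorem nodup (hT : s.IsComaximalFactorization T L) : T.Nodup := by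
  rw [Multiset.nodup_iff_ne_cons_cons]
  rintro J U rfl
  obtain ⟨hJ, hJU, -⟩ := cons_iff.mp hT
  exact hJ.not_starComaximal_self (hJU J (Multiset.mem_cons_self J U))

protected theorem unique (hs : s.FiniteCharacter) (hT : s.IsComaximalFactorization T L)
    (hU : s.IsComaximalFactorization U L) : T = U :=
  (hT.nodup.ext hU.nodup).mpr fun _ => ⟨(hT.subset hs hU ·), (hU.subset hs hT ·)⟩

theorem starInvertible (hT : s.IsComaximalFactorization T L) (hL : s.StarInvertible L)
    (hJ : J ∈ T) : s.StarInvertible J := by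
  obtain ⟨U, rfl⟩ := Multiset.exists_cons_of_mem hJ
  obtain ⟨hJh, -, hU, rfl⟩ := cons_iff.mp hT
  exact hL.of_idealClosure_mul hJh.ne_bot (prod_ne_bot_of_isHomog hU.isHomog)

end IsComaximalFactorization

end StarOperation

open StarOperation in
theorem SH_principal_factorization_general {D K : Type*} [CommRing D] [IsDomain D] [Field K]
    [Algebra D K] [IsFractionRing D K] (s : StarOperation D K) (hs : s.FiniteCharacter)
    {L : Ideal D} (hL : s.StarInvertible L) {S : Multiset (Ideal D)} (hS : ∀ J ∈ S, s.IsHomog J)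
    (hSL : s.star (S.prod : FractionalIdeal D⁰ K) = (L : FractionalIdeal D⁰ K)) :
    (∃ T : Multiset (Ideal D), (∀ J ∈ T, s.IsHomog J ∧ s.StarInvertible J) ∧
      T.Pairwise s.StarComaximal ∧
      s.star (T.prod : FractionalIdeal D⁰ K) = (L : FractionalIdeal D⁰ K) ∧
      ∀ U : Multiset (Ideal D), (∀ J ∈ U, s.IsHomog J) → U.Pairwise s.StarComaximal →
        s.star (U.prod : FractionalIdeal D⁰ K) = (L : FractionalIdeal D⁰ K) → U = T) ∧
    ∀ (M : Ideal D) [M.IsPrime], s.IsMaxStarIdeal M → L ≤ M →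
      s.StarInvertible (localContraction M L) ∧ s.IsHomog (localContraction M L) := by
  rw [s.star_coeIdeal_eq_coeIdeal (prod_ne_bot_of_isHomog hS)] at hSL
  subst hSL
  obtain ⟨T, hT⟩ := IsComaximalFactorization.exists_of_isHomog hs hS
  obtain ⟨hTh, hTpair, hTprod⟩ := isComaximalFactorization_iff.mp hT
  refine ⟨⟨T, fun J hJ => ⟨hTh J hJ, hT.starInvertible hL hJ⟩, hTpair, hTprod, ?_⟩, ?_⟩
  · intro U hUh hUpair hUprod
    exact (isComaximalFactorization_iff.mpr ⟨hUh, hUpair, hUprod⟩).unique hs hT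
  · intro M _ hM hLM
    have hmem := hT.localContraction_mem hs hM hLM
    exact ⟨hT.starInvertible hL hmem, hTh _ hmem⟩

/-- In a `*`-SH domain, every principal ideal `xD` generated by a nonzero
nonunit is expressible, uniquely up to order, as a `*`-product of mutually `*`-comaximal
`*`-homogeneous ideals, each `*`-invertible. Moreover, if `M` is a (prime) maximal
`*`-ideal containing `x`, then `xD_M ∩ D` is a `*`-invertible `*`-homogeneous ideal. -/
theorem SH_principal_factorization {D K : Type*} [CommRing D] [IsDomain D] [Field K]
    [Algebra D K] [IsFractionRing D K] (s : StarOperation D K) (hs : s.FiniteCharacter)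
    (hSH : s.IsSHDomain) (x : D) (hx0 : x ≠ 0) (hxu : ¬IsUnit x) :
    (∃ T : Multiset (Ideal D), (∀ J ∈ T, s.IsHomog J ∧ s.StarInvertible J) ∧
      T.Pairwise s.StarComaximal ∧
      s.star ((T.prod : Ideal D) : FractionalIdeal D⁰ K) =
        ((Ideal.span {x} : Ideal D) : FractionalIdeal D⁰ K) ∧
      ∀ U : Multiset (Ideal D), (∀ J ∈ U, s.IsHomog J) → U.Pairwise s.StarComaximal →
        s.star ((U.prod : Ideal D) : FractionalIdeal D⁰ K) =
          ((Ideal.span {x} : Ideal D) : FractionalIdeal D⁰ K) → U = T) ∧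
    (∀ (M : Ideal D) [M.IsPrime], s.IsMaxStarIdeal M → x ∈ M →
      s.StarInvertible (Ideal.comap (algebraMap D (Localization.AtPrime M))
        (Ideal.map (algebraMap D (Localization.AtPrime M)) (Ideal.span {x}))) ∧
      s.IsHomog (Ideal.comap (algebraMap D (Localization.AtPrime M))
        (Ideal.map (algebraMap D (Localization.AtPrime M)) (Ideal.span {x})))) := by
  obtain ⟨S, hS, hSx⟩ := hSH x hx0 hxu
  simpa only [localContraction, Ideal.span_singleton_le_iff_mem] using
    SH_principal_factorization_general s hs (s.starInvertible_span_singleton hx0) hS hSx
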